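/- arXiv:1509.04551 — 3 statements merged into one kernel-verified Lean document; each statement's English description precedes it below -/
import Mathlib

section
/- Let U ⊆ ℝⁿ and V ⊆ ℝ^m be open, and let π : U → V be a smooth surjective submersion (Dπ(x) : ℝⁿ → ℝ^m is surjective for every x) whose fibers π⁻¹(y) are connected. Let α : U → Sym(n,ℝ) be a smooth map such that: (i) α(x) is positive semi-definite for every x; (ii) ker α(x) = ker Dπ(x) for every x ∈ U; (iii) L_Xα = 0 for every smooth vector field X : U → ℝⁿ with Dπ(x)X(x) = 0 for all x. Then there exists a unique smooth map g : V → Sym(m,ℝ) such that g(y) is positive definite for every y ∈ V and α(x) = (Dπ(x))ᵀ g(π(x)) Dπ(x) for every x ∈ U; i.e. α descends to a Riemannian metric on the leaf space of its characteristic distribution. (Descent step of Theorem 3.) -/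
open Matrix

/-- The Jacobian matrix of a vector field `X : ℝⁿ → ℝⁿ` at `x`, computed with
derivatives taken within the set `U`. -/
noncomputable def jacobianWithin {n : ℕ} (U : Set (Fin n → ℝ))
    (X : (Fin n → ℝ) → (Fin n → ℝ)) (x : Fin n → ℝ) : Matrix (Fin n) (Fin n) ℝ :=
  Matrix.of fun i j => fderivWithin ℝ (fun y => X y i) U x (Pi.single j 1)

/-- The (rectangular) Jacobian matrix of a map `π : ℝⁿ → ℝᵐ` at `x`, computed with
derivatives taken within the set `U`: `(Dπ(x))ᵢⱼ = ∂ⱼπᵢ(x)`. -/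
noncomputable def jacobianRectWithin {n m : ℕ} (U : Set (Fin n → ℝ))
    (π : (Fin n → ℝ) → (Fin m → ℝ)) (x : Fin n → ℝ) : Matrix (Fin m) (Fin n) ℝ :=
  Matrix.of fun i j => fderivWithin ℝ (fun y => π y i) U x (Pi.single j 1)

/-- The Lie derivative of a symmetric-matrix-valued map `α` along a vector field `X`:
`(L_Xα)(x) = Dα(x)[X(x)] + (DX(x))ᵀ α(x) + α(x) DX(x)`. -/
noncomputable def lieDerivMat {n : ℕ} (U : Set (Fin n → ℝ))
    (α : (Fin n → ℝ) → Matrix (Fin n) (Fin n) ℝ)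
    (X : (Fin n → ℝ) → (Fin n → ℝ)) (x : Fin n → ℝ) : Matrix (Fin n) (Fin n) ℝ :=
  (Matrix.of fun i j => fderivWithin ℝ (fun y => α y i j) U x (X x))
    + (jacobianWithin U X x)ᵀ * α x + α x * jacobianWithin U X x

/-!
A section of `Dπ` is given by `P = Jᵀ (J Jᵀ)⁻¹`, where `J` is the Jacobian of `π`, and any `g` with
`α = Jᵀ (g ∘ π) J` must satisfy `g ∘ π = Pᵀ α P`. The entries of `Pᵀ α P` are `α(Y, Z)` for vector
fields `Y`, `Z` that `π` projects to constant fields. For a vertical field `X`,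
`X(α(Y, Z)) = (L_X α)(Y, Z) + α([X, Y], Z) + α(Y, [X, Z])`, and the brackets are vertical, hence in
the kernel of `α`; so the entries have zero derivative along the fibres. Locally a submersion is a
projection, so a function with this property is locally a smooth function of `π`, and connectedness
of the fibres makes these local factorizations agree.
-/

open Set Filter VectorField
open scoped ContDiff Topology

section LinearAlgebra

variable {m n R : Type*} [Fintype m] [Fintype n] [DecidableEq m]

/-- The right inverse `Aᵀ (A Aᵀ)⁻¹` of a matrix `A` with independent rows (the Moore–Penrose
inverse over `ℝ`), an explicit choice that is smooth in `A`. When `A Aᵀ` is not invertible its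
value is `0`. -/
noncomputable def rightPseudoinverse [CommRing R] (A : Matrix m n R) : Matrix n m R :=
  Aᵀ * (A * Aᵀ)⁻¹

/-- The bilinear form on the target of `A` obtained by restricting the form `α` along the right
inverse of `A`; it recovers `g` from `α = Aᵀ g A`. -/
noncomputable def inducedForm [CommRing R] (A : Matrix m n R) (α : Matrix n n R) : Matrix m m R :=
  (rightPseudoinverse A)ᵀ * α * rightPseudoinverse A

lemma inducedForm_apply [CommRing R] (A : Matrix m n R) (α : Matrix n n R) (a b : m) :
    inducedForm A α a b =
      (rightPseudoinverse A).col a ⬝ᵥ α *ᵥ (rightPseudoinverse A).col b := by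
  rw [inducedForm, Matrix.mul_assoc]
  rfl

variable [Field R] [LinearOrder R] [IsStrictOrderedRing R] {A : Matrix m n R}

lemma isUnit_mul_transpose_self (hA : Function.Surjective A.mulVec) : IsUnit (A * Aᵀ) := by
  obtain ⟨B, hAB⟩ := mulVec_surjective_iff_exists_right_inverse.1 hA
  have hBA : Bᵀ * Aᵀ = 1 := by rw [← transpose_mul, hAB, transpose_one]
  refine mulVec_injective_iff_isUnit.1 <| (injective_iff_map_eq_zero (A * Aᵀ).mulVecLin).2
    fun u hu => ?_
  have hAu : Aᵀ *ᵥ u = 0 := dotProduct_self_eq_zero.1 <| by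
    rw [dotProduct_mulVec, vecMul_transpose, mulVec_mulVec, ← mulVecLin_apply, hu, zero_dotProduct]
  rw [← one_mulVec u, ← hBA, ← mulVec_mulVec, hAu, mulVec_zero]

lemma mul_rightPseudoinverse (hA : Function.Surjective A.mulVec) :
    A * rightPseudoinverse A = 1 := by
  rw [rightPseudoinverse, ← Matrix.mul_assoc,
    mul_nonsing_inv _ ((isUnit_iff_isUnit_det _).1 (isUnit_mul_transpose_self hA))]

lemma inducedForm_transpose_mul_mul (hA : Function.Surjective A.mulVec) (g : Matrix m m R) :
    inducedForm A (Aᵀ * g * A) = g := by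
  have hA' := mul_rightPseudoinverse hA
  calc inducedForm A (Aᵀ * g * A)
      = (A * rightPseudoinverse A)ᵀ * g * (A * rightPseudoinverse A) := by
        simp only [inducedForm, transpose_mul, Matrix.mul_assoc]
    _ = g := by rw [hA', transpose_one, Matrix.one_mul, Matrix.mul_one]

lemma transpose_mul_inducedForm_mul (hA : Function.Surjective A.mulVec) {α : Matrix n n R}
    (hsymm : α.IsSymm) (hker : ∀ w, A *ᵥ w = 0 → α *ᵥ w = 0) :
    Aᵀ * inducedForm A α * A = α := by
  have hright : α * (rightPseudoinverse A * A) = α := by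
    refine ext_iff_mulVec.2 fun w => ?_
    have hw : A *ᵥ ((rightPseudoinverse A * A) *ᵥ w - w) = 0 := by
      rw [mulVec_sub, mulVec_mulVec, ← Matrix.mul_assoc, mul_rightPseudoinverse hA,
        Matrix.one_mul, sub_self]
    rw [← mulVec_mulVec, ← sub_eq_zero, ← mulVec_sub, hker _ hw]
  have hleft : (rightPseudoinverse A * A)ᵀ * α = α := by
    simpa only [transpose_mul, hsymm.eq] using congrArg transpose hright
  calc Aᵀ * inducedForm A α * A
      = (rightPseudoinverse A * A)ᵀ * α * (rightPseudoinverse A * A) := by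
        simp only [inducedForm, transpose_mul, Matrix.mul_assoc]
    _ = α := by rw [hleft, hright]

lemma mulVec_col_rightPseudoinverse (hA : Function.Surjective A.mulVec) (a : m) :
    A *ᵥ (rightPseudoinverse A).col a = Pi.single a 1 := by
  rw [← mulVec_single_one, mulVec_mulVec, mul_rightPseudoinverse hA, one_mulVec]

lemma posDef_of_posSemidef_transpose_mul_mul {m n : Type*} [Fintype m] [Fintype n]
    {A : Matrix m n ℝ} {g : Matrix m m ℝ}
    (hA : Function.Surjective A.mulVec) (hpos : (Aᵀ * g * A).PosSemidef)
    (hker : ∀ w, (Aᵀ * g * A) *ᵥ w = 0 → A *ᵥ w = 0) : g.PosDef := by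
  classical
  have hg : g.PosSemidef := by
    rw [← inducedForm_transpose_mul_mul hA g]
    exact hpos.conjTranspose_mul_mul_same (rightPseudoinverse A)
  refine hg.posDef_iff_isUnit.2 <| mulVec_injective_iff_isUnit.1 <|
    (injective_iff_map_eq_zero g.mulVecLin).2 fun u hu => ?_
  obtain ⟨w, rfl⟩ := hA u
  exact hker w <| by rw [← mulVec_mulVec, ← mulVec_mulVec, ← mulVecLin_apply g, hu, mulVec_zero]

end LinearAlgebra

section SmoothMatrices

variable {𝕜 E : Type*} [NontriviallyNormedField 𝕜] [NormedAddCommGroup E] [NormedSpace 𝕜 E]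
  {k : ℕ∞ω} {s : Set E} {l m n : Type*} [Fintype m]

lemma contDiffOn_matrix_mul {A : E → Matrix l m 𝕜} {B : E → Matrix m n 𝕜}
    (hA : ∀ i j, ContDiffOn 𝕜 k (fun x => A x i j) s)
    (hB : ∀ i j, ContDiffOn 𝕜 k (fun x => B x i j) s) (i : l) (j : n) :
    ContDiffOn 𝕜 k (fun x => (A x * B x) i j) s := by
  simp only [mul_apply]
  exact ContDiffOn.sum fun r _ => (hA i r).mul (hB r j)

lemma contDiffOn_matrix_mulVec [Fintype l] {A : E → Matrix l m 𝕜} {v : E → m → 𝕜}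
    (hA : ∀ i j, ContDiffOn 𝕜 k (fun x => A x i j) s) (hv : ContDiffOn 𝕜 k v s) :
    ContDiffOn 𝕜 k (fun x => A x *ᵥ v x) s :=
  contDiffOn_pi.2 fun i => ContDiffOn.sum fun j _ => (hA i j).mul (contDiffOn_pi.1 hv j)

variable [DecidableEq m]

lemma contDiffOn_matrix_det {A : E → Matrix m m 𝕜}
    (hA : ∀ i j, ContDiffOn 𝕜 k (fun x => A x i j) s) :
    ContDiffOn 𝕜 k (fun x => (A x).det) s := by
  simp only [det_apply]
  exact ContDiffOn.sum fun σ _ => (contDiffOn_prod fun i _ => hA (σ i) i).const_smul _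

lemma contDiffOn_matrix_inv {A : E → Matrix m m 𝕜}
    (hA : ∀ i j, ContDiffOn 𝕜 k (fun x => A x i j) s) (hunit : ∀ x ∈ s, IsUnit (A x)) (i j : m) :
    ContDiffOn 𝕜 k (fun x => (A x)⁻¹ i j) s := by
  have hadj : ContDiffOn 𝕜 k (fun x => (A x).adjugate i j) s := by
    simp only [adjugate_apply]
    refine contDiffOn_matrix_det fun a b => ?_
    obtain rfl | ha := eq_or_ne a j
    · simpa only [updateRow_self] using contDiffOn_const
    · simpa only [updateRow_ne ha] using hA a b
  simp only [inv_def, Ring.inverse_eq_inv', Matrix.smul_apply, smul_eq_mul]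
  exact ((contDiffOn_matrix_det hA).inv fun x hx =>
    ((isUnit_iff_isUnit_det _).1 (hunit x hx)).ne_zero).mul hadj

end SmoothMatrices

section SmoothInducedForm

variable {E m n : Type*} [NormedAddCommGroup E] [NormedSpace ℝ E] [Fintype m] [DecidableEq m]
  [Fintype n] {k : ℕ∞ω} {s : Set E}

lemma contDiffOn_rightPseudoinverse {A : E → Matrix m n ℝ}
    (hA : ∀ i j, ContDiffOn ℝ k (fun x => A x i j) s)
    (hsurj : ∀ x ∈ s, Function.Surjective (A x).mulVec) (i : n) (j : m) :
    ContDiffOn ℝ k (fun x => rightPseudoinverse (A x) i j) s :=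
  contDiffOn_matrix_mul (fun i j => hA j i) (contDiffOn_matrix_inv
    (contDiffOn_matrix_mul hA fun i j => hA j i) fun x hx =>
      isUnit_mul_transpose_self (hsurj x hx)) i j

lemma contDiffOn_inducedForm {A : E → Matrix m n ℝ} {α : E → Matrix n n ℝ}
    (hA : ∀ i j, ContDiffOn ℝ k (fun x => A x i j) s)
    (hsurj : ∀ x ∈ s, Function.Surjective (A x).mulVec)
    (hα : ∀ i j, ContDiffOn ℝ k (fun x => α x i j) s) (a b : m) :
    ContDiffOn ℝ k (fun x => inducedForm (A x) (α x) a b) s :=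
  have hP := contDiffOn_rightPseudoinverse hA hsurj
  contDiffOn_matrix_mul (contDiffOn_matrix_mul (fun i j => hP j i) hα) hP a b

end SmoothInducedForm

section Submersion

variable {𝕜 E F G : Type*} [RCLike 𝕜] [NormedAddCommGroup E] [NormedSpace 𝕜 E]
  [NormedAddCommGroup F] [NormedSpace 𝕜 F] [NormedAddCommGroup G] [NormedSpace 𝕜 G]
  {k : ℕ∞ω} {p : E → F} {f : E → G}

lemma eventually_differentiableAt_of_contDiffAt {x : E} (hf : ContDiffAt 𝕜 k f x) (hk : k ≠ 0) :
    ∀ᶠ z in 𝓝 x, DifferentiableAt 𝕜 f z :=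
  ((hf.of_le (ENat.one_le_iff_ne_zero_withTop.2 hk)).eventually (by simp)).mono fun _ hz =>
    hz.differentiableAt one_ne_zero

lemma eventually_eq_section_of_fderiv_inr_eq_zero {h : E × F → G} {q : E × F}
    (hdiff : ∀ᶠ z in 𝓝 q, DifferentiableAt 𝕜 h z)
    (hzero : ∀ᶠ z in 𝓝 q, ∀ v, fderiv 𝕜 h z (0, v) = 0) :
    ∀ᶠ z in 𝓝 q, h z = h (z.1, q.2) := by
  obtain ⟨ε, hε, hball⟩ := Metric.eventually_nhds_iff_ball.1 (hdiff.and hzero)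
  rw [← Prod.mk.eta (p := q), ← ball_prod_same] at hball
  filter_upwards [Metric.ball_mem_nhds q hε] with ⟨y, w⟩ hyw
  rw [← Prod.mk.eta (p := q), ← ball_prod_same] at hyw
  have hslice : ∀ v ∈ Metric.ball q.2 ε, HasFDerivAt (fun v => h (y, v)) (0 : F →L[𝕜] G) v := by
    intro v hv
    obtain ⟨hd, h0⟩ := hball (y, v) ⟨hyw.1, hv⟩
    exact (hd.hasFDerivAt.comp v (hasFDerivAt_prodMk_right y v)).congr_fderiv
      (ContinuousLinearMap.ext fun u => h0 u)
  let := NormedSpace.restrictScalars ℝ 𝕜 F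
  exact Metric.isOpen_ball.is_const_of_fderiv_eq_zero (convex_ball _ _).isPreconnected
    (fun v hv => (hslice v hv).differentiableAt.differentiableWithinAt)
    (fun v hv => (hslice v hv).fderiv) hyw.2 (Metric.mem_ball_self hε)

variable [CompleteSpace E] [CompleteSpace F]

lemma exists_contDiffAt_eventually_eq_comp {x₀ : E} (hk : k ≠ 0) (hp : ContDiffAt 𝕜 k p x₀)
    (hrange : (fderiv 𝕜 p x₀).range = ⊤) (hcompl : (fderiv 𝕜 p x₀).ker.ClosedComplemented)
    (hf : ContDiffAt 𝕜 k f x₀) (hker : ∀ᶠ x in 𝓝 x₀, (fderiv 𝕜 p x).ker ≤ (fderiv 𝕜 f x).ker) :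
    ∃ g : F → G, ContDiffAt 𝕜 k g (p x₀) ∧ ∀ᶠ x in 𝓝 x₀, f x = g (p x) := by
  let φ := (hp.hasStrictFDerivAt hk).implicitFunctionDataOfComplemented p _ hrange hcompl
  let ψ := Function.uncurry φ.implicitFunction
  let q := φ.prodFun x₀
  have hψ : ContDiffAt 𝕜 k ψ q := by
    refine ImplicitFunctionData.contDiffAt_implicitFunction hp ?_ hk
    exact (ContinuousLinearMap.contDiff _).contDiffAt.comp x₀ (contDiffAt_id.sub contDiffAt_const)
  have hψq : ψ q = x₀ := φ.implicitFunction_apply_image.self_of_nhds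
  have hψx₀ : Tendsto ψ (𝓝 q) (𝓝 x₀) := by simpa only [hψq] using hψ.continuousAt.tendsto
  have hfψ : ContDiffAt 𝕜 k (f ∘ ψ) q := ContDiffAt.comp q (hψq.symm ▸ hf) hψ
  have hzero : ∀ᶠ z in 𝓝 q, ∀ v, fderiv 𝕜 (f ∘ ψ) z (0, v) = 0 := by
    have hpf := ((eventually_differentiableAt_of_contDiffAt hp hk).and
      (eventually_differentiableAt_of_contDiffAt hf hk)).and hker
    filter_upwards [hψx₀.eventually hpf, eventually_differentiableAt_of_contDiffAt hψ hk,
      φ.leftFun_implicitFunction.eventually_nhds] with z ⟨⟨hpz, hfz⟩, hkerz⟩ hψz hfst v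
    have hker_v : fderiv 𝕜 p (ψ z) (fderiv 𝕜 ψ z (0, v)) = 0 := by
      have hpψ : p ∘ ψ =ᶠ[𝓝 z] Prod.fst := hfst
      rw [← ContinuousLinearMap.comp_apply, ← fderiv_comp z hpz hψz, hpψ.fderiv_eq, fderiv_fst]
      rfl
    rw [fderiv_comp z hfz hψz]
    exact hkerz hker_v
  have hsec := eventually_eq_section_of_fderiv_inr_eq_zero
    (eventually_differentiableAt_of_contDiffAt hfψ hk) hzero
  refine ⟨fun y => f (ψ (y, q.2)), ?_, ?_⟩
  · exact ContDiffAt.comp (f := fun y => (y, q.2)) (p x₀) hfψ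
      (contDiffAt_id.prodMk contDiffAt_const)
  · have hq : Tendsto φ.prodFun (𝓝 x₀) (𝓝 q) := φ.hasStrictFDerivAt.continuousAt
    filter_upwards [hq.eventually hsec, φ.implicitFunction_apply_image] with x hx hψx
    exact (congrArg f hψx).symm.trans hx

lemma exists_contDiffOn_eqOn_comp {U : Set E} (hU : IsOpen U) (hk : k ≠ 0)
    (hp : ContDiffOn 𝕜 k p U) (hrange : ∀ x ∈ U, (fderivWithin 𝕜 p U x).range = ⊤)
    (hcompl : ∀ x ∈ U, (fderivWithin 𝕜 p U x).ker.ClosedComplemented)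
    (hfib : ∀ y ∈ p '' U, IsPreconnected (U ∩ p ⁻¹' {y})) (hf : ContDiffOn 𝕜 k f U)
    (hker : ∀ x ∈ U, (fderivWithin 𝕜 p U x).ker ≤ (fderivWithin 𝕜 f U x).ker) :
    ∃ g : F → G, ContDiffOn 𝕜 k g (p '' U) ∧ EqOn f (g ∘ p) U := by
  have hlocal : ∀ x ∈ U, ∃ g : F → G, ContDiffAt 𝕜 k g (p x) ∧ ∀ᶠ z in 𝓝 x, f z = g (p z) := by
    intro x hx
    have hUx := hU.mem_nhds hx
    have hD := fderivWithin_of_isOpen (𝕜 := 𝕜) (f := p) hU hx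
    refine exists_contDiffAt_eventually_eq_comp hk (hp.contDiffAt hUx) (hD ▸ hrange x hx)
      (hD ▸ hcompl x hx) (hf.contDiffAt hUx) ?_
    filter_upwards [hUx] with z hz
    simpa only [fderivWithin_of_isOpen hU hz] using hker z hz
  have hconst : ∀ x ∈ U, ∀ x' ∈ U, p x = p x' → f x = f x' := by
    intro x hx x' hx' hxx'
    refine (hfib (p x') (mem_image_of_mem p hx')).induction₂ (fun z z' => f z = f z') ?_
      (fun _ _ _ _ _ _ => Eq.trans) (fun _ _ _ _ => Eq.symm) ⟨hx, hxx'⟩ ⟨hx', rfl⟩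
    rintro z ⟨hz, hzp⟩
    obtain ⟨g, -, hg⟩ := hlocal z hz
    filter_upwards [nhdsWithin_le_nhds hg, self_mem_nhdsWithin] with w hw hwU
    rw [hw, hg.self_of_nhds, hwU.2, hzp]
  have hdesc : EqOn f ((f ∘ Function.invFunOn p U) ∘ p) U := fun x hx =>
    hconst x hx _ (Function.invFunOn_apply_mem hx) (Function.invFunOn_apply_eq hx).symm
  refine ⟨f ∘ Function.invFunOn p U, ?_, hdesc⟩
  rintro _ ⟨x, hx, rfl⟩
  obtain ⟨g, hg, hfg⟩ := hlocal x hx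
  have hmap : map p (𝓝 x) = 𝓝 (p x) := by
    have hpx := hp.contDiffAt (hU.mem_nhds hx)
    exact (hpx.hasStrictFDerivAt hk).map_nhds_eq_of_surj
      (fderivWithin_of_isOpen (𝕜 := 𝕜) (f := p) hU hx ▸ hrange x hx)
  refine (hg.congr_of_eventuallyEq ?_).contDiffWithinAt
  rw [EventuallyEq, ← hmap, eventually_map]
  filter_upwards [hfg, hU.mem_nhds hx] with z hz hzU
  exact (hdesc hzU).symm.trans hz

end Submersion

section LieDerivative

lemma fderivWithin_lieBracketWithin_eq_zero {𝕜 E F : Type*} [RCLike 𝕜]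
    [NormedAddCommGroup E] [NormedSpace 𝕜 E] [NormedAddCommGroup F] [NormedSpace 𝕜 F]
    {U : Set E} {p : E → F} {V W : E → E} {c d : F} (hU : IsOpen U) (hp : ContDiffOn 𝕜 2 p U)
    (hV : DifferentiableOn 𝕜 V U) (hW : DifferentiableOn 𝕜 W U)
    (hpV : ∀ x ∈ U, fderivWithin 𝕜 p U x (V x) = c)
    (hpW : ∀ x ∈ U, fderivWithin 𝕜 p U x (W x) = d) {x : E} (hx : x ∈ U) :
    fderivWithin 𝕜 p U x (lieBracketWithin 𝕜 V W U x) = 0 := by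
  rw [fderivWithin_apply_lieBracket (hp x hx) (by simp) hU.uniqueDiffOn
      (subset_closure (hU.interior_eq.symm ▸ hx)) hx (hW x hx) (hV x hx),
    fderivWithin_congr hpW (hpW x hx), fderivWithin_congr hpV (hpV x hx)]
  simp only [fderivWithin_fun_const, Pi.zero_apply, _root_.zero_apply, sub_self]

lemma fderivWithin_dotProduct_mulVec {𝕜 E m n : Type*} [NontriviallyNormedField 𝕜]
    [NormedAddCommGroup E] [NormedSpace 𝕜 E] [Fintype m] [Fintype n] {s : Set E} {x : E}
    {Y : E → m → 𝕜} {A : E → Matrix m n 𝕜} {Z : E → n → 𝕜} (hs : UniqueDiffWithinAt 𝕜 s x)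
    (hY : DifferentiableWithinAt 𝕜 Y s x)
    (hA : ∀ i j, DifferentiableWithinAt 𝕜 (fun y => A y i j) s x)
    (hZ : DifferentiableWithinAt 𝕜 Z s x) (v : E) :
    fderivWithin 𝕜 (fun y => Y y ⬝ᵥ A y *ᵥ Z y) s x v =
      fderivWithin 𝕜 Y s x v ⬝ᵥ A x *ᵥ Z x
        + Y x ⬝ᵥ (Matrix.of fun i j => fderivWithin 𝕜 (fun y => A y i j) s x v) *ᵥ Z x
        + Y x ⬝ᵥ A x *ᵥ fderivWithin 𝕜 Z s x v := by
  have hprod : HasFDerivWithinAt (fun y => Y y ⬝ᵥ A y *ᵥ Z y) _ s x :=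
    HasFDerivWithinAt.fun_sum (u := Finset.univ) fun i _ =>
      (hasFDerivWithinAt_pi'.1 hY.hasFDerivWithinAt i).mul
        (HasFDerivWithinAt.fun_sum (u := Finset.univ) fun j _ =>
          (hA i j).hasFDerivWithinAt.mul (hasFDerivWithinAt_pi'.1 hZ.hasFDerivWithinAt j))
  rw [hprod.fderivWithin hs]
  simp only [dotProduct, mulVec, of_apply, ← Finset.sum_add_distrib, _root_.sum_apply]
  refine Finset.sum_congr rfl fun i _ => ?_
  simp only [Finset.sum_add_distrib, smul_add, _root_.add_apply, _root_.smul_apply,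
    _root_.sum_apply, ContinuousLinearMap.comp_apply, ContinuousLinearMap.proj_apply, smul_eq_mul,
    mul_comm]
  ring

variable {m n : ℕ} {U : Set (Fin n → ℝ)} {x : Fin n → ℝ} {π : (Fin n → ℝ) → Fin m → ℝ}
  {α : (Fin n → ℝ) → Matrix (Fin n) (Fin n) ℝ} {X Y Z : (Fin n → ℝ) → Fin n → ℝ}

lemma jacobianRectWithin_mulVec (hU : UniqueDiffWithinAt ℝ U x)
    (hπ : DifferentiableWithinAt ℝ π U x) (w : Fin n → ℝ) :
    jacobianRectWithin U π x *ᵥ w = fderivWithin ℝ π U x w := by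
  have hJ : jacobianRectWithin U π x = LinearMap.toMatrix' (fderivWithin ℝ π U x).toLinearMap := by
    ext i j
    simp only [jacobianRectWithin, of_apply, LinearMap.toMatrix'_apply, fderivWithin_apply hπ hU]
    rfl
  rw [hJ, ← toLin'_apply, toLin'_toMatrix']
  rfl

lemma mulVec_jacobianRectWithin_surjective (hU : UniqueDiffWithinAt ℝ U x)
    (hπ : DifferentiableWithinAt ℝ π U x)
    (hsubm : Function.Surjective (fderivWithin ℝ π U x)) :
    Function.Surjective (jacobianRectWithin U π x).mulVec := by
  rwa [funext (jacobianRectWithin_mulVec hU hπ)]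

lemma contDiffOn_jacobianRectWithin {k : ℕ∞ω} (hU : UniqueDiffOn ℝ U)
    (hπ : ContDiffOn ℝ (k + 1) π U) (i : Fin m) (j : Fin n) :
    ContDiffOn ℝ k (fun x => jacobianRectWithin U π x i j) U :=
  ((contDiffOn_pi.1 hπ i).fderivWithin hU le_rfl).clm_apply contDiffOn_const

lemma fderivWithin_dotProduct_mulVec_eq_lieDerivMat (hU : UniqueDiffWithinAt ℝ U x)
    (hα : ∀ i j, DifferentiableWithinAt ℝ (fun y => α y i j) U x)
    (hX : DifferentiableWithinAt ℝ X U x) (hY : DifferentiableWithinAt ℝ Y U x)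
    (hZ : DifferentiableWithinAt ℝ Z U x) :
    fderivWithin ℝ (fun y => Y y ⬝ᵥ α y *ᵥ Z y) U x (X x) =
      Y x ⬝ᵥ lieDerivMat U α X x *ᵥ Z x + lieBracketWithin ℝ X Y U x ⬝ᵥ α x *ᵥ Z x
        + Y x ⬝ᵥ α x *ᵥ lieBracketWithin ℝ X Z U x := by
  have hDX : ∀ w, jacobianWithin U X x *ᵥ w = fderivWithin ℝ X U x w :=
    jacobianRectWithin_mulVec hU hX
  have hleft : Y x ⬝ᵥ ((jacobianWithin U X x)ᵀ * α x) *ᵥ Z x =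
      fderivWithin ℝ X U x (Y x) ⬝ᵥ α x *ᵥ Z x := by
    rw [← mulVec_mulVec, dotProduct_mulVec, vecMul_transpose, hDX]
  have hright : Y x ⬝ᵥ (α x * jacobianWithin U X x) *ᵥ Z x =
      Y x ⬝ᵥ α x *ᵥ fderivWithin ℝ X U x (Z x) := by
    rw [← mulVec_mulVec, hDX]
  simp only [fderivWithin_dotProduct_mulVec hU hY hα hZ, lieDerivMat, lieBracketWithin, add_mulVec,
    dotProduct_add, sub_dotProduct, mulVec_sub, dotProduct_sub, hleft, hright]
  ring

lemma fderivWithin_dotProduct_mulVec_eq_zero (hU : IsOpen U) (hx : x ∈ U)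
    (hπ : ContDiffOn ℝ 2 π U) (hα : ∀ i j, DifferentiableWithinAt ℝ (fun y => α y i j) U x)
    (hsymm : (α x).IsSymm) (hker : ∀ w, fderivWithin ℝ π U x w = 0 → α x *ᵥ w = 0)
    (hX : DifferentiableOn ℝ X U) (hY : DifferentiableOn ℝ Y U) (hZ : DifferentiableOn ℝ Z U)
    {c d : Fin m → ℝ} (hπX : ∀ z ∈ U, fderivWithin ℝ π U z (X z) = 0)
    (hπY : ∀ z ∈ U, fderivWithin ℝ π U z (Y z) = c)
    (hπZ : ∀ z ∈ U, fderivWithin ℝ π U z (Z z) = d) (hLie : lieDerivMat U α X x = 0) :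
    fderivWithin ℝ (fun y => Y y ⬝ᵥ α y *ᵥ Z y) U x (X x) = 0 := by
  have hXY := hker _ (fderivWithin_lieBracketWithin_eq_zero hU hπ hX hY hπX hπY hx)
  have hXZ := hker _ (fderivWithin_lieBracketWithin_eq_zero hU hπ hX hZ hπX hπZ hx)
  rw [fderivWithin_dotProduct_mulVec_eq_lieDerivMat (hU.uniqueDiffWithinAt hx) hα (hX x hx)
      (hY x hx) (hZ x hx), hLie, hXZ, dotProduct_mulVec _ (α x), ← mulVec_transpose, hsymm.eq, hXY]
  simp only [zero_mulVec, dotProduct_zero, zero_dotProduct, add_zero]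

end LieDerivative

section Descent

variable {m n : ℕ} {U : Set (Fin n → ℝ)} {π : (Fin n → ℝ) → Fin m → ℝ}
  {α : (Fin n → ℝ) → Matrix (Fin n) (Fin n) ℝ} {k : ℕ∞ω}

lemma exists_contDiffOn_vertical_extension (hU : IsOpen U) (hπ : ContDiffOn ℝ (k + 1) π U)
    (hsubm : ∀ x ∈ U, Function.Surjective (fderivWithin ℝ π U x)) {x v : Fin n → ℝ} (hx : x ∈ U)
    (hv : fderivWithin ℝ π U x v = 0) :
    ∃ X : (Fin n → ℝ) → Fin n → ℝ,
      ContDiffOn ℝ k X U ∧ (∀ y ∈ U, fderivWithin ℝ π U y (X y) = 0) ∧ X x = v := by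
  set J := jacobianRectWithin U π
  have hπ₁ : DifferentiableOn ℝ π U := hπ.differentiableOn (by simp)
  have hJ : ∀ y ∈ U, ∀ w, J y *ᵥ w = fderivWithin ℝ π U y w := fun y hy =>
    jacobianRectWithin_mulVec (hU.uniqueDiffWithinAt hy) (hπ₁ y hy)
  have hJsurj := fun y (hy : y ∈ U) => mulVec_jacobianRectWithin_surjective
    (hU.uniqueDiffWithinAt hy) (hπ₁ y hy) (hsubm y hy)
  have hJk := contDiffOn_jacobianRectWithin hU.uniqueDiffOn hπ
  have hPJ : ContDiffOn ℝ k (fun y => (rightPseudoinverse (J y) * J y) *ᵥ v) U :=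
    contDiffOn_matrix_mulVec
      (contDiffOn_matrix_mul (contDiffOn_rightPseudoinverse hJk hJsurj) hJk) contDiffOn_const
  refine ⟨fun y => v - (rightPseudoinverse (J y) * J y) *ᵥ v, contDiffOn_const.sub hPJ,
    fun y hy => ?_, ?_⟩
  · rw [← hJ y hy, mulVec_sub, mulVec_mulVec, ← Matrix.mul_assoc,
      mul_rightPseudoinverse (hJsurj y hy), Matrix.one_mul, sub_self]
  · simp only [← mulVec_mulVec, hJ x hx, hv, mulVec_zero, sub_zero]

lemma ker_le_ker_fderivWithin_inducedForm (hU : IsOpen U) (hk : 1 ≤ k)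
    (hπ : ContDiffOn ℝ (k + 1) π U)
    (hsubm : ∀ x ∈ U, Function.Surjective (fderivWithin ℝ π U x))
    (hα : ∀ i j, ContDiffOn ℝ k (fun x => α x i j) U) (hsymm : ∀ x ∈ U, (α x).IsSymm)
    (hker : ∀ x ∈ U, ∀ w, fderivWithin ℝ π U x w = 0 → α x *ᵥ w = 0)
    (hLie : ∀ X : (Fin n → ℝ) → Fin n → ℝ, ContDiffOn ℝ k X U →
      (∀ x ∈ U, fderivWithin ℝ π U x (X x) = 0) → ∀ x ∈ U, lieDerivMat U α X x = 0)
    (a b : Fin m) {x : Fin n → ℝ} (hx : x ∈ U) :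
    (fderivWithin ℝ π U x).ker ≤
      (fderivWithin ℝ (fun y => inducedForm (jacobianRectWithin U π y) (α y) a b) U x).ker := by
  intro v hv
  let P := fun y => rightPseudoinverse (jacobianRectWithin U π y)
  have hk₀ : k ≠ 0 := (zero_lt_one.trans_le hk).ne'
  have hk₂ : 2 ≤ k + 1 := one_add_one_eq_two.symm.trans_le (add_le_add_left hk 1)
  have hπ₁ : DifferentiableOn ℝ π U := hπ.differentiableOn (by simp)
  have hJsurj := fun y (hy : y ∈ U) => mulVec_jacobianRectWithin_surjective
    (hU.uniqueDiffWithinAt hy) (hπ₁ y hy) (hsubm y hy)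
  have hP : ∀ c, DifferentiableOn ℝ (fun y => (P y).col c) U := fun c =>
    (contDiffOn_pi.2 fun i => contDiffOn_rightPseudoinverse
      (contDiffOn_jacobianRectWithin hU.uniqueDiffOn hπ) hJsurj i c).differentiableOn hk₀
  have hπP : ∀ c, ∀ y ∈ U, fderivWithin ℝ π U y ((P y).col c) = Pi.single c 1 := fun c y hy => by
    rw [← jacobianRectWithin_mulVec (hU.uniqueDiffWithinAt hy) (hπ₁ y hy),
      mulVec_col_rightPseudoinverse (hJsurj y hy)]
  obtain ⟨X, hX, hπX, rfl⟩ := exists_contDiffOn_vertical_extension hU hπ hsubm hx hv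
  simp only [inducedForm_apply]
  exact fderivWithin_dotProduct_mulVec_eq_zero hU hx (hπ.of_le hk₂)
    (fun i j => (hα i j).differentiableOn hk₀ x hx) (hsymm x hx) (hker x hx)
    (hX.differentiableOn hk₀) (hP a) (hP b) hπX (hπP a) (hπP b) (hLie X hX hπX x hx)

theorem exists_contDiffOn_eq_transpose_mul_mul (hU : IsOpen U) (hk : 1 ≤ k)
    (hπ : ContDiffOn ℝ (k + 1) π U)
    (hsubm : ∀ x ∈ U, Function.Surjective (fderivWithin ℝ π U x))
    (hfib : ∀ y ∈ π '' U, IsPreconnected (U ∩ π ⁻¹' {y}))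
    (hα : ∀ i j, ContDiffOn ℝ k (fun x => α x i j) U) (hsymm : ∀ x ∈ U, (α x).IsSymm)
    (hker : ∀ x ∈ U, ∀ w, fderivWithin ℝ π U x w = 0 → α x *ᵥ w = 0)
    (hLie : ∀ X : (Fin n → ℝ) → Fin n → ℝ, ContDiffOn ℝ k X U →
      (∀ x ∈ U, fderivWithin ℝ π U x (X x) = 0) → ∀ x ∈ U, lieDerivMat U α X x = 0) :
    ∃ g : (Fin m → ℝ) → Matrix (Fin m) (Fin m) ℝ,
      (∀ i j, ContDiffOn ℝ k (fun y => g y i j) (π '' U)) ∧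
      ∀ x ∈ U, α x = (jacobianRectWithin U π x)ᵀ * g (π x) * jacobianRectWithin U π x := by
  have hπ₁ : DifferentiableOn ℝ π U := hπ.differentiableOn (by simp)
  have hJsurj := fun x (hx : x ∈ U) => mulVec_jacobianRectWithin_surjective
    (hU.uniqueDiffWithinAt hx) (hπ₁ x hx) (hsubm x hx)
  choose g hg hgπ using fun a b => exists_contDiffOn_eqOn_comp hU (zero_lt_one.trans_le hk).ne'
    (hπ.of_le le_self_add) (fun x hx => LinearMap.range_eq_top.2 (hsubm x hx))
    (fun x _ => (fderivWithin ℝ π U x).ker_closedComplemented_of_finiteDimensional_range) hfib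
    (contDiffOn_inducedForm (contDiffOn_jacobianRectWithin hU.uniqueDiffOn hπ) hJsurj hα a b)
    (fun x hx => ker_le_ker_fderivWithin_inducedForm hU hk hπ hsubm hα hsymm hker hLie a b hx)
  refine ⟨fun y => Matrix.of fun a b => g a b y, hg, fun x hx => ?_⟩
  have hgx : (Matrix.of fun a b => g a b (π x)) = inducedForm (jacobianRectWithin U π x) (α x) :=
    Matrix.ext fun a b => (hgπ a b hx).symm
  simp only [hgx]
  refine (transpose_mul_inducedForm_mul (hJsurj x hx) (hsymm x hx) fun w hw => ?_).symm
  exact hker x hx w <| by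
    rw [← jacobianRectWithin_mulVec (hU.uniqueDiffWithinAt hx) (hπ₁ x hx), hw]

theorem descends_to_riemannian_metric_general (hU : IsOpen U) (hk : 1 ≤ k)
    (hπ : ContDiffOn ℝ (k + 1) π U)
    (hsubm : ∀ x ∈ U, Function.Surjective (fderivWithin ℝ π U x))
    (hfib : ∀ y ∈ π '' U, IsPreconnected (U ∩ π ⁻¹' {y}))
    (hα : ∀ i j, ContDiffOn ℝ k (fun x => α x i j) U) (hPSD : ∀ x ∈ U, (α x).PosSemidef)
    (hker : ∀ x ∈ U, ∀ w, α x *ᵥ w = 0 ↔ fderivWithin ℝ π U x w = 0)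
    (hLie : ∀ X : (Fin n → ℝ) → Fin n → ℝ, ContDiffOn ℝ k X U →
      (∀ x ∈ U, fderivWithin ℝ π U x (X x) = 0) → ∀ x ∈ U, lieDerivMat U α X x = 0) :
    ∃ g : (Fin m → ℝ) → Matrix (Fin m) (Fin m) ℝ,
      ((∀ i j, ContDiffOn ℝ k (fun y => g y i j) (π '' U)) ∧ (∀ y ∈ π '' U, (g y).PosDef) ∧
        ∀ x ∈ U, α x = (jacobianRectWithin U π x)ᵀ * g (π x) * jacobianRectWithin U π x) ∧
      ∀ g' : (Fin m → ℝ) → Matrix (Fin m) (Fin m) ℝ,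
        (∀ x ∈ U, α x = (jacobianRectWithin U π x)ᵀ * g' (π x) * jacobianRectWithin U π x) →
        EqOn g' g (π '' U) := by
  have hπ₁ : DifferentiableOn ℝ π U := hπ.differentiableOn (by simp)
  have hJsurj := fun x (hx : x ∈ U) => mulVec_jacobianRectWithin_surjective
    (hU.uniqueDiffWithinAt hx) (hπ₁ x hx) (hsubm x hx)
  obtain ⟨g, hg, hαg⟩ := exists_contDiffOn_eq_transpose_mul_mul hU hk hπ hsubm hfib hα
    (fun x hx => isHermitian_iff_isSymm.1 (hPSD x hx).isHermitian)
    (fun x hx w => (hker x hx w).2) hLie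
  refine ⟨g, ⟨hg, ?_, hαg⟩, ?_⟩
  · rintro _ ⟨x, hx, rfl⟩
    refine posDef_of_posSemidef_transpose_mul_mul (hJsurj x hx) (hαg x hx ▸ hPSD x hx)
      fun w hw => ?_
    rw [jacobianRectWithin_mulVec (hU.uniqueDiffWithinAt hx) (hπ₁ x hx)]
    exact (hker x hx w).1 (hαg x hx ▸ hw)
  · rintro g' hαg' _ ⟨x, hx, rfl⟩
    rw [← inducedForm_transpose_mul_mul (hJsurj x hx) (g' (π x)), ← hαg' x hx, hαg x hx,
      inducedForm_transpose_mul_mul (hJsurj x hx)]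

end Descent

/-- **Descent step of Theorem 3.**
Let `π : U → V` be a smooth surjective submersion with connected fibers, and let
`α : U → Sym(n,ℝ)` be smooth, positive semi-definite, with `ker α(x) = ker Dπ(x)` and
`L_X α = 0` for all smooth `X` tangent to the fibers.  Then there is a unique smooth
positive-definite `g : V → Sym(m,ℝ)` with `α(x) = (Dπ(x))ᵀ g(π(x)) Dπ(x)` on `U`. -/
theorem descends_to_riemannian_metric {n m : ℕ}
    (U : Set (Fin n → ℝ)) (hU : IsOpen U)
    (V : Set (Fin m → ℝ)) (hV : IsOpen V)
    (π : (Fin n → ℝ) → (Fin m → ℝ)) (hπ : ContDiffOn ℝ (⊤ : ℕ∞) π U)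
    (hmaps : ∀ x ∈ U, π x ∈ V)
    (hsurj : π '' U = V)
    (hsubm : ∀ x ∈ U, Function.Surjective (fderivWithin ℝ π U x))
    (hfib : ∀ y ∈ V, IsConnected {x | x ∈ U ∧ π x = y})
    (α : (Fin n → ℝ) → Matrix (Fin n) (Fin n) ℝ)
    (hαsmooth : ∀ i j, ContDiffOn ℝ (⊤ : ℕ∞) (fun x => α x i j) U)
    (hPSD : ∀ x ∈ U, (α x).PosSemidef)
    (hker : ∀ x ∈ U, ∀ w : Fin n → ℝ,
      (α x).mulVec w = 0 ↔ fderivWithin ℝ π U x w = 0)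
    (hLie : ∀ X : (Fin n → ℝ) → (Fin n → ℝ), ContDiffOn ℝ (⊤ : ℕ∞) X U →
      (∀ x ∈ U, fderivWithin ℝ π U x (X x) = 0) →
      ∀ x ∈ U, lieDerivMat U α X x = 0) :
    ∃ g : (Fin m → ℝ) → Matrix (Fin m) (Fin m) ℝ,
      ((∀ i j, ContDiffOn ℝ (⊤ : ℕ∞) (fun y => g y i j) V) ∧
        (∀ y ∈ V, (g y).PosDef) ∧
        (∀ x ∈ U, α x =
          (jacobianRectWithin U π x)ᵀ * g (π x) * jacobianRectWithin U π x)) ∧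
      ∀ g' : (Fin m → ℝ) → Matrix (Fin m) (Fin m) ℝ,
        ((∀ i j, ContDiffOn ℝ (⊤ : ℕ∞) (fun y => g' y i j) V) ∧
          (∀ y ∈ V, (g' y).PosDef) ∧
          (∀ x ∈ U, α x =
            (jacobianRectWithin U π x)ᵀ * g' (π x) * jacobianRectWithin U π x)) →
        ∀ y ∈ V, g' y = g y := by
  subst hsurj
  obtain ⟨g, hg, huniq⟩ := descends_to_riemannian_metric_general hU (k := ∞)
    (ENat.one_le_iff_ne_zero_withTop.2 (by simp)) (by simpa using hπ) hsubm
    (fun y hy => (hfib y hy).isPreconnected) hαsmooth hPSD hker hLie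
  exact ⟨g, hg, fun g' hg' => huniq g' hg'.2.2⟩
end

section
/- Fix a constant κ₀ > 0 and let ν(r) = κ₀ r⁻³ for r > 0. There is no sequence (h_k)_{k∈ℕ} of C¹ real functions on Ω = ℝ³ × (ℝ³ ∖ {0}) such that for every (x,v) ∈ Ω and all pairs of tangent vectors (a,b), (a′,b′) ∈ ℝ³ × ℝ³ the series ∑_{k∈ℕ} (∇ₓh_k(x,v)·a + ∇ᵥh_k(x,v)·b)(∇ₓh_k(x,v)·a′ + ∇ᵥh_k(x,v)·b′) converges absolutely with sum ν(|v|) |v|² ( a·a′ − (a·v)(a′·v)/|v|² ). In other words, the symmetric tensor α_L = ν(|v|)|v|²(I − v̂v̂) dxⁱ dxʲ of the classical Lorentz pitch-angle collision operator admits no decomposition ∑_k dh_k ⊗ dh_k, so the classical Fokker–Planck equation for the Lorentz plasma is not Hamiltonian in the stochastic sense. -/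
/-- Euclidean dot product on `ℝ³`. -/
def dot3 (a b : Fin 3 → ℝ) : ℝ := ∑ i, a i * b i

/-- Euclidean norm on `ℝ³`. -/
noncomputable def norm3 (v : Fin 3 → ℝ) : ℝ := Real.sqrt (dot3 v v)

/-- The electron phase space `Ω = ℝ³ × (ℝ³ ∖ {0})` (position, velocity). -/
def phaseSpace : Set ((Fin 3 → ℝ) × (Fin 3 → ℝ)) := {p | p.2 ≠ 0}

/-!
A sum of squares `∑ₖ dh_k(a,b)²` that depends only on the position component `a` forces every `h_k`
to be independent of velocity, because the velocity space is connected. Hence `dh_k(a,0)`, and with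
it the whole tensor, is independent of velocity as well. But the Lorentz tensor at `v` annihilates
`v` and no nonzero vector orthogonal to `v`, so its values at two orthogonal velocities differ.
-/

section ProductDerivative

open scoped Topology

variable {E F G : Type*} [NormedAddCommGroup E] [NormedAddCommGroup F] [NormedAddCommGroup G]

theorem eq_of_hasFDerivAt_of_vertical_eq_zero {𝕜 : Type*} [RCLike 𝕜]
    [NormedSpace 𝕜 E] [NormedSpace 𝕜 F] [NormedSpace 𝕜 G] {t : Set F} (ht : IsOpen t)
    (ht' : IsPreconnected t) {f : E × F → G} {f' : F → E × F →L[𝕜] G} {x : E}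
    (hf : ∀ v ∈ t, HasFDerivAt f (f' v) (x, v)) (hvert : ∀ v ∈ t, ∀ b, f' v (0, b) = 0)
    {v w : F} (hv : v ∈ t) (hw : w ∈ t) : f (x, v) = f (x, w) := by
  have hpartial : ∀ u ∈ t, HasFDerivAt (fun u ↦ f (x, u)) (0 : F →L[𝕜] G) u := by
    intro u hu
    have hcomp : (f' u).comp (ContinuousLinearMap.inr 𝕜 E F) = 0 :=
      ContinuousLinearMap.ext fun b ↦ hvert u hu b
    exact hcomp ▸ (hf u hu).comp u (hasFDerivAt_prodMk_right x u)
  let : NormedSpace ℝ F := .restrictScalars ℝ 𝕜 F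
  exact ht.is_const_of_fderiv_eq_zero ht'
    (fun u hu ↦ (hpartial u hu).differentiableAt.differentiableWithinAt)
    (fun u hu ↦ (hpartial u hu).fderiv) hv hw

theorem horizontal_eq_of_hasFDerivAt {𝕜 : Type*} [NontriviallyNormedField 𝕜]
    [NormedSpace 𝕜 E] [NormedSpace 𝕜 F] [NormedSpace 𝕜 G] {f : E × F → G}
    {L M : E × F →L[𝕜] G} {x : E} {v w : F} (hL : HasFDerivAt f L (x, v))
    (hM : HasFDerivAt f M (x, w)) (hf : ∀ᶠ y in 𝓝 x, f (y, v) = f (y, w)) (a : E) :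
    L (a, 0) = M (a, 0) := by
  have hLx := hL.comp x (hasFDerivAt_prodMk_left (𝕜 := 𝕜) x v)
  have hMx := hM.comp x (hasFDerivAt_prodMk_left (𝕜 := 𝕜) x w)
  exact DFunLike.congr_fun (hLx.unique (hMx.congr_of_eventuallyEq hf)) a

theorem eq_of_hasSum_sq_horizontal [NormedSpace ℝ E] [NormedSpace ℝ F] {ι : Type*}
    {s : Set E} {t : Set F} (hs : IsOpen s) (ht : IsOpen t) (ht' : IsPreconnected t)
    {h : ι → E × F → ℝ} {h' : ι → E × F → E × F →L[ℝ] ℝ}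
    (hh : ∀ k, ∀ x ∈ s, ∀ v ∈ t, HasFDerivAt (h k) (h' k (x, v)) (x, v)) {q : E → F → E → ℝ}
    (hq : ∀ x ∈ s, ∀ v ∈ t, ∀ a b, HasSum (fun k ↦ h' k (x, v) (a, b) ^ 2) (q x v a))
    {x : E} (hx : x ∈ s) {v w : F} (hv : v ∈ t) (hw : w ∈ t) (a : E) : q x v a = q x w a := by
  have hvert : ∀ k, ∀ y ∈ s, ∀ u ∈ t, ∀ b, h' k (y, u) (0, b) = 0 := by
    intro k y hy u hu b
    have hq0 : q y u 0 = 0 := (hq y hy u hu 0 0).unique <| by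
      simpa only [← Prod.zero_eq_mk, map_zero, sq, mul_zero] using hasSum_zero
    have hsum := hq y hy u hu 0 b
    rw [hq0, hasSum_zero_iff_of_nonneg fun k ↦ sq_nonneg _] at hsum
    exact pow_eq_zero_iff two_ne_zero |>.mp (congrFun hsum k)
  have hconst : ∀ k, ∀ y ∈ s, h k (y, v) = h k (y, w) := fun k y hy ↦
    eq_of_hasFDerivAt_of_vertical_eq_zero ht ht' (hh k y hy) (hvert k y hy) hv hw
  have hhoriz : ∀ k, h' k (x, v) (a, 0) = h' k (x, w) (a, 0) := fun k ↦
    horizontal_eq_of_hasFDerivAt (hh k x hx v hv) (hh k x hx w hw)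
      (Filter.eventually_of_mem (hs.mem_nhds hx) (hconst k)) a
  refine (hq x hx v hv a 0).unique ?_
  simpa only [hhoriz] using hq x hx w hw a 0

end ProductDerivative

section PitchAngle

/-- The quadratic form `a ↦ a · 𝖴(v) a` of the pitch-angle tensor `𝖴(v) = |v|²(I − v̂v̂)`, for the
inner product given by a bilinear form `g`. It is written without the division hidden in `v̂`, so
that it makes sense over any commutative ring. -/
def pitchAngleForm {R M : Type*} [CommRing R] [AddCommGroup M] [Module R M]
    (g : LinearMap.BilinForm R M) (v a : M) : R :=
  g v v * g a a - g v a ^ 2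

theorem pitchAngleForm_self {R M : Type*} [CommRing R] [AddCommGroup M] [Module R M]
    (g : LinearMap.BilinForm R M) (v : M) : pitchAngleForm g v v = 0 := by
  rw [pitchAngleForm, sq, sub_self]

variable {K V : Type*} [Field K] [AddCommGroup V] [Module K V]

theorem exists_ne_zero_apply_eq_zero_of_one_lt_rank (hV : 1 < Module.rank K V) (f : V →ₗ[K] K) :
    ∃ a ≠ 0, f a = 0 := by
  by_contra! hf
  have hinj : Function.Injective f :=
    (injective_iff_map_eq_zero f).mpr fun a ha ↦ by_contra fun ha0 ↦ hf a ha0 ha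
  have hrank := f.lift_rank_le_of_injective hinj
  rw [Module.rank_self, Cardinal.lift_one, Cardinal.lift_le_one_iff] at hrank
  exact hV.not_ge hrank

theorem exists_pitchAngleForm_ne_zero (hV : 1 < Module.rank K V) {g : LinearMap.BilinForm K V}
    (hg : ∀ v, g v v = 0 → v = 0) {v : V} (hv : v ≠ 0) :
    ∃ a ≠ 0, pitchAngleForm g v a ≠ 0 := by
  obtain ⟨a, ha, hva⟩ := exists_ne_zero_apply_eq_zero_of_one_lt_rank hV (g v)
  refine ⟨a, ha, ?_⟩
  rw [pitchAngleForm, hva, zero_pow two_ne_zero, sub_zero]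
  exact mul_ne_zero (mt (hg v) hv) (mt (hg a) ha)

end PitchAngle

section Euclidean

theorem norm3_sq (v : Fin 3 → ℝ) : norm3 v ^ 2 = dot3 v v :=
  Real.sq_sqrt (Finset.sum_nonneg fun i _ ↦ mul_self_nonneg (v i))

theorem norm3_ne_zero {v : Fin 3 → ℝ} (hv : v ≠ 0) : norm3 v ≠ 0 := by
  rw [← pow_ne_zero_iff two_ne_zero, norm3_sq]
  exact mt dotProduct_self_eq_zero.mp hv

theorem norm3_sq_mul_eq_pitchAngleForm {v : Fin 3 → ℝ} (hv : v ≠ 0) (a : Fin 3 → ℝ) :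
    norm3 v ^ 2 * (dot3 a a - dot3 a v * dot3 a v / norm3 v ^ 2) =
      pitchAngleForm (dotProductBilin ℝ ℝ) v a := by
  have hcomm : dot3 a v = dot3 v a := dotProduct_comm a v
  rw [mul_sub, mul_div_cancel₀ _ (pow_ne_zero 2 (norm3_ne_zero hv)), norm3_sq, hcomm, ← sq]
  rfl

end Euclidean

theorem lorentz_operator_not_hamiltonian_general {E ι : Type*} [NormedAddCommGroup E]
    [NormedSpace ℝ E] (hE : 1 < Module.rank ℝ E) {g : LinearMap.BilinForm ℝ E}
    (hg : ∀ v, g v v = 0 → v = 0) {ν : E → E → ℝ} (hν : ∃ x, ∃ v ≠ 0, ν x v ≠ 0) :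
    ¬ ∃ h : ι → E × E → ℝ,
      (∀ k, DifferentiableOn ℝ (h k) {p | p.2 ≠ 0}) ∧
      ∀ x v, v ≠ 0 → ∀ a b,
        HasSum (fun k ↦ fderivWithin ℝ (h k) {p | p.2 ≠ 0} (x, v) (a, b) ^ 2)
          (ν x v * pitchAngleForm g v a) := by
  rintro ⟨h, hdiff, hsum⟩
  obtain ⟨x, v, hv, hνv⟩ := hν
  obtain ⟨a, ha, hva⟩ := exists_pitchAngleForm_ne_zero hE hg hv
  have hopen : IsOpen {p : E × E | p.2 ≠ 0} := isOpen_ne_fun continuous_snd continuous_const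
  have hderiv : ∀ k, ∀ x ∈ Set.univ, ∀ v ∈ ({0}ᶜ : Set E),
      HasFDerivAt (h k) (fderivWithin ℝ (h k) {p | p.2 ≠ 0} (x, v)) (x, v) := fun k x _ v hv ↦
    (hdiff k (x, v) hv).hasFDerivWithinAt.hasFDerivAt (hopen.mem_nhds hv)
  have heq : ν x v * pitchAngleForm g v a = ν x a * pitchAngleForm g a a :=
    eq_of_hasSum_sq_horizontal (q := fun x v a ↦ ν x v * pitchAngleForm g v a)
      isOpen_univ isOpen_compl_singleton
      (isConnected_compl_singleton_of_one_lt_rank hE 0).isPreconnected hderiv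
      (fun x _ v hv ↦ hsum x v hv) (Set.mem_univ x) hv ha a
  rw [pitchAngleForm_self, mul_zero] at heq
  exact mul_ne_zero hνv hva heq

/-- **The classical Lorentz collision operator is not stochastically Hamiltonian.**
Fix `κ₀ > 0` and `ν(r) = κ₀ r⁻³`.  There is no sequence `(h_k)` of `C¹` functions on
`Ω = ℝ³ × (ℝ³ ∖ {0})` such that for every `(x,v) ∈ Ω` and all tangent vectors
`(a,b), (a′,b′)`, the series `∑ₖ dh_k(x,v)[(a,b)] · dh_k(x,v)[(a′,b′)]` converges
absolutely with sum `ν(|v|) |v|² (a·a′ − (a·v)(a′·v)/|v|²)`; that is, the Lorentz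
tensor `α_L = ν(|v|)|v|²(I − v̂v̂)dxⁱdxʲ` admits no decomposition `∑ₖ dh_k ⊗ dh_k`. -/
theorem lorentz_operator_not_hamiltonian (κ₀ : ℝ) (hκ₀ : 0 < κ₀) :
    ¬ ∃ h : ℕ → ((Fin 3 → ℝ) × (Fin 3 → ℝ)) → ℝ,
      (∀ k, ContDiffOn ℝ 1 (h k) phaseSpace) ∧
      (∀ (x v : Fin 3 → ℝ), v ≠ 0 → ∀ a b a' b' : Fin 3 → ℝ,
        (Summable fun k =>
          |fderivWithin ℝ (h k) phaseSpace (x, v) (a, b) *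
            fderivWithin ℝ (h k) phaseSpace (x, v) (a', b')|) ∧
        HasSum (fun k =>
            fderivWithin ℝ (h k) phaseSpace (x, v) (a, b) *
              fderivWithin ℝ (h k) phaseSpace (x, v) (a', b'))
          ((κ₀ / norm3 v ^ 3) * norm3 v ^ 2 *
            (dot3 a a' - dot3 a v * dot3 a' v / norm3 v ^ 2))) := by
  rintro ⟨h, hC, H⟩
  refine lorentz_operator_not_hamiltonian_general (g := dotProductBilin ℝ ℝ)
    (ν := fun _ v ↦ κ₀ / norm3 v ^ 3) (by simp) (fun v ↦ dotProduct_self_eq_zero.mp)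
    ⟨0, 1, one_ne_zero, div_ne_zero hκ₀.ne' (pow_ne_zero 3 (norm3_ne_zero one_ne_zero))⟩
    ⟨h, fun k ↦ (hC k).differentiableOn one_ne_zero, fun x v hv a b ↦ ?_⟩
  have hs := (H x v hv a b a b).2
  rw [mul_assoc, norm3_sq_mul_eq_pitchAngleForm hv] at hs
  simpa only [sq] using! hs
end

section
/- Let R > 0, τ > 0, and let C : ℝ → ℝ be twice continuously differentiable and even, with C(d) = 0 for all |d| ≥ 2R. Then: (i) for every r > 0, ∫₀^τ (1 − t/τ) C″(rt) dt = (C(rτ) − C(0)) / (r²τ); and (ii) the vector field Φ(v) = ( ∫₀^τ (1 − t/τ) C″(|v|t) dt ) v on ℝ³ ∖ {0} satisfies, for every v with |v| > 2R/τ, div Φ(v) = ∑_{i=1}^3 ∂Φᵢ/∂vᵢ (v) = −C(0)/(τ|v|²). In particular, when C(0) ≠ 0 this divergence is nonzero, so the Hamiltonian Fokker–Planck collision operator for the Lorentz plasma, whose energy-production rate is proportional to this divergence, does not conserve kinetic energy. (The energy-production identity underlying Eq. (energy_growth).) -/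
open MeasureTheory

/-!
Substituting `u = rt` turns `∫₀^τ (1 - t/τ) C″(rt) dt` into `(r²τ)⁻¹ ∫₀^{rτ} (rτ - u) C″(u) du`,
whose integral is the first-order Taylor remainder of `C` at `0`. For `C′(0) = 0` and `rτ` beyond
the support of `C` only `-C(0) / (r²τ)` is left, so `Φ` is there a multiple of the field `v / |v|²`,
whose divergence in dimension `n` is `(n - 2) / |v|²`.
-/

theorem integral_sub_smul_deriv_deriv {E : Type*} [NormedAddCommGroup E] [NormedSpace ℝ E]
    [CompleteSpace E] {f : ℝ → E} (hf : ContDiff ℝ 2 f) (a b : ℝ) :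
    ∫ t in a..b, (b - t) • deriv (deriv f) t = f b - f a - (b - a) • deriv f a := by
  have hf' : ContDiff ℝ 1 (deriv f) := ContDiff.deriv' (n := 1) hf
  have hf'' : Continuous (deriv (deriv f)) := hf'.continuous_deriv le_rfl
  have byParts := intervalIntegral.integral_smul_deriv_eq_deriv_smul (a := a) (b := b)
    (fun t _ ↦ (hasDerivAt_id t).const_sub b)
    (fun t _ ↦ (hf'.differentiable one_ne_zero t).hasDerivAt)
    intervalIntegrable_const (hf''.intervalIntegrable a b)
  have ftc : ∫ t in a..b, deriv f t = f b - f a :=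
    intervalIntegral.integral_deriv_eq_sub (fun t _ ↦ hf.differentiable two_ne_zero t)
      (hf'.continuous.intervalIntegrable a b)
  simp only [id_eq, neg_smul, one_smul, intervalIntegral.integral_neg, ftc, sub_self,
    zero_smul] at byParts
  rw [byParts]
  abel

theorem deriv_zero_of_even {E : Type*} [NormedAddCommGroup E] [NormedSpace ℝ E] {f : ℝ → E}
    (hf : f.Even) : deriv f 0 = 0 := by
  have : IsAddTorsionFree E := .of_isTorsionFree ℝ E
  have h := deriv_comp_neg f 0
  rwa [show (fun x ↦ f (-x)) = f from funext hf, neg_zero, self_eq_neg] at h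

section Divergence

variable {ι : Type*} [Fintype ι] [DecidableEq ι]

/-- The divergence `∑ᵢ ∂Fᵢ/∂xᵢ` of a vector field on Euclidean space. A component that is not
differentiable at `x` contributes `0`. -/
noncomputable def divergence (F : EuclideanSpace ℝ ι → EuclideanSpace ℝ ι)
    (x : EuclideanSpace ℝ ι) : ℝ :=
  ∑ i, fderiv ℝ (fun w ↦ F w i) x (EuclideanSpace.single i 1)

theorem divergence_smul_self {f : EuclideanSpace ℝ ι → ℝ} {x : EuclideanSpace ℝ ι}
    (hf : DifferentiableAt ℝ f x) :
    divergence (fun w ↦ f w • w) x = Fintype.card ι * f x + fderiv ℝ f x x := by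
  have partialDeriv (i : ι) :
      fderiv ℝ (fun w : EuclideanSpace ℝ ι ↦ (f w • w) i) x (EuclideanSpace.single i 1)
        = f x + x i * fderiv ℝ f x (EuclideanSpace.single i 1) := by
    have h := hf.hasFDerivAt.mul
      (EuclideanSpace.proj i : EuclideanSpace ℝ ι →L[ℝ] ℝ).hasFDerivAt
    refine (congrArg (· (EuclideanSpace.single i 1)) h.fderiv).trans ?_
    simp
  have expand : ∑ i, x i • EuclideanSpace.single i (1 : ℝ) = x := by
    simpa using (EuclideanSpace.basisFun ι ℝ).sum_repr x
  calc divergence (fun w ↦ f w • w) x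
      = ∑ i, (f x + x i * fderiv ℝ f x (EuclideanSpace.single i 1)) :=
        Finset.sum_congr rfl fun i _ ↦ partialDeriv i
    _ = Fintype.card ι * f x + fderiv ℝ f x (∑ i, x i • EuclideanSpace.single i (1 : ℝ)) := by
        simp [Finset.sum_add_distrib, map_sum]
    _ = Fintype.card ι * f x + fderiv ℝ f x x := by rw [expand]

theorem divergence_norm_smul_self {g : ℝ → ℝ} {g' : ℝ} {x : EuclideanSpace ℝ ι} (hx : x ≠ 0)
    (hg : HasDerivAt g g' ‖x‖) :
    divergence (fun w ↦ g ‖w‖ • w) x = Fintype.card ι * g ‖x‖ + g' * ‖x‖ := by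
  have hnorm : DifferentiableAt ℝ (fun w : EuclideanSpace ℝ ι ↦ ‖w‖) x :=
    (contDiffAt_norm ℝ hx).differentiableAt one_ne_zero
  have hcomp : HasFDerivAt (fun w ↦ g ‖w‖) (g' • fderiv ℝ (‖·‖) x) x :=
    hg.comp_hasFDerivAt x hnorm.hasFDerivAt
  rw [divergence_smul_self hcomp.differentiableAt, hcomp.fderiv, smul_apply,
    hnorm.fderiv_norm_self, smul_eq_mul]

end Divergence

section EnergyFlux

/-- The scalar `∫₀^τ (1 - t/τ) C″(rt) dt` by which the diffusion tensor `D_{HL}` acts, up to a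
constant factor, on `dH₀` at speed `r`. -/
noncomputable def energyFluxCoeff (τ : ℝ) (C : ℝ → ℝ) (r : ℝ) : ℝ :=
  ∫ t in (0 : ℝ)..τ, (1 - t / τ) * deriv (deriv C) (r * t)

/-- The vector field `Φ(v) = (∫₀^τ (1 - t/τ) C″(|v|t) dt) v`, whose divergence is proportional to
the kinetic-energy production rate. -/
noncomputable def energyFlux {ι : Type*} [Fintype ι] (τ : ℝ) (C : ℝ → ℝ)
    (v : EuclideanSpace ℝ ι) : EuclideanSpace ℝ ι :=
  energyFluxCoeff τ C ‖v‖ • v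

variable {τ : ℝ} {C : ℝ → ℝ}

theorem energyFluxCoeff_eq_taylor_remainder (hτ : τ ≠ 0) (hC : ContDiff ℝ 2 C) {r : ℝ}
    (hr : r ≠ 0) :
    energyFluxCoeff τ C r = (C (r * τ) - C 0 - r * τ * deriv C 0) / (r ^ 2 * τ) := by
  calc energyFluxCoeff τ C r
      = ∫ t in (0 : ℝ)..τ, (r * τ)⁻¹ * ((r * τ - r * t) * deriv (deriv C) (r * t)) := by
        refine intervalIntegral.integral_congr fun t _ ↦ ?_
        field_simp
    _ = r⁻¹ * ((r * τ)⁻¹ * ∫ u in (0 : ℝ)..r * τ, (r * τ - u) * deriv (deriv C) u) := by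
        rw [intervalIntegral.integral_const_mul, intervalIntegral.integral_comp_mul_left
          (fun u ↦ (r * τ - u) * deriv (deriv C) u) hr, mul_zero, smul_eq_mul, mul_left_comm]
    _ = r⁻¹ * ((r * τ)⁻¹ * (C (r * τ) - C 0 - r * τ * deriv C 0)) := by
        have taylor := integral_sub_smul_deriv_deriv hC 0 (r * τ)
        simp only [smul_eq_mul, sub_zero] at taylor
        rw [taylor]
    _ = (C (r * τ) - C 0 - r * τ * deriv C 0) / (r ^ 2 * τ) := by field_simp

theorem hasDerivAt_energyFluxCoeff (hτ : τ ≠ 0) (hC : ContDiff ℝ 2 C) {r : ℝ} (hr : r ≠ 0) :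
    HasDerivAt (energyFluxCoeff τ C)
      ((deriv C (r * τ) - deriv C 0) / r ^ 2 - 2 / r * energyFluxCoeff τ C r) r := by
  have hCτ : HasDerivAt (fun s ↦ C (s * τ)) (deriv C (r * τ) * τ) r :=
    (hC.differentiable two_ne_zero (r * τ)).hasDerivAt.comp r (hasDerivAt_mul_const τ)
  have hnum : HasDerivAt (fun s ↦ C (s * τ) - C 0 - s * τ * deriv C 0)
      (deriv C (r * τ) * τ - τ * deriv C 0) r :=
    (hCτ.sub_const (C 0)).sub ((hasDerivAt_mul_const τ).mul_const (deriv C 0))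
  have hden : HasDerivAt (fun s : ℝ ↦ s ^ 2 * τ) (2 * r * τ) r := by
    simpa using (hasDerivAt_pow 2 r).mul_const τ
  have heq : energyFluxCoeff τ C
      =ᶠ[nhds r] fun s ↦ (C (s * τ) - C 0 - s * τ * deriv C 0) / (s ^ 2 * τ) := by
    filter_upwards [isOpen_ne.mem_nhds hr] with s hs
    exact energyFluxCoeff_eq_taylor_remainder hτ hC hs
  refine ((hnum.div hden (by positivity)).congr_of_eventuallyEq heq).congr_deriv ?_
  rw [energyFluxCoeff_eq_taylor_remainder hτ hC hr]
  field_simp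

variable {ι : Type*} [Fintype ι] [DecidableEq ι]

theorem divergence_energyFlux (hτ : τ ≠ 0) (hC : ContDiff ℝ 2 C) {v : EuclideanSpace ℝ ι}
    (hv : v ≠ 0) :
    divergence (energyFlux τ C) v
      = (Fintype.card ι - 2) * energyFluxCoeff τ C ‖v‖
        + (deriv C (‖v‖ * τ) - deriv C 0) / ‖v‖ := by
  have hv' : ‖v‖ ≠ 0 := norm_ne_zero_iff.2 hv
  refine (divergence_norm_smul_self hv (hasDerivAt_energyFluxCoeff hτ hC hv')).trans ?_
  field_simp
  ring

theorem divergence_energyFlux_of_eventuallyEq_zero (hτ : τ ≠ 0) (hC : ContDiff ℝ 2 C)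
    (hC' : deriv C 0 = 0) {v : EuclideanSpace ℝ ι} (hv : v ≠ 0)
    (hvanish : C =ᶠ[nhds (‖v‖ * τ)] 0) :
    divergence (energyFlux τ C) v = (Fintype.card ι - 2) * (-C 0 / (τ * ‖v‖ ^ 2)) := by
  have hderiv : deriv C (‖v‖ * τ) = 0 := by simp [hvanish.deriv_eq]
  rw [divergence_energyFlux hτ hC hv,
    energyFluxCoeff_eq_taylor_remainder hτ hC (norm_ne_zero_iff.2 hv), hvanish.eq_of_nhds, hderiv,
    hC']
  simp [mul_comm τ]

theorem hamiltonian_lorentz_energy_production_general {R : ℝ} (hR : 0 ≤ R) (hτ : 0 < τ)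
    (hC : ContDiff ℝ 2 C) (hC' : deriv C 0 = 0) (hsupp : ∀ d, 2 * R ≤ d → C d = 0) :
    (∀ r : ℝ, r ≠ 0 → energyFluxCoeff τ C r = (C (r * τ) - C 0) / (r ^ 2 * τ)) ∧
    (∀ v : EuclideanSpace ℝ ι, 2 * R / τ < ‖v‖ →
      divergence (energyFlux τ C) v = (Fintype.card ι - 2) * (-C 0 / (τ * ‖v‖ ^ 2))) ∧
    (Fintype.card ι ≠ 2 → C 0 ≠ 0 → ∀ v : EuclideanSpace ℝ ι, 2 * R / τ < ‖v‖ →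
      divergence (energyFlux τ C) v ≠ 0) := by
  have speed_pos {v : EuclideanSpace ℝ ι} (hv : 2 * R / τ < ‖v‖) : 0 < ‖v‖ :=
    lt_of_le_of_lt (by positivity) hv
  have hdiv (v : EuclideanSpace ℝ ι) (hv : 2 * R / τ < ‖v‖) :
      divergence (energyFlux τ C) v = (Fintype.card ι - 2) * (-C 0 / (τ * ‖v‖ ^ 2)) := by
    refine divergence_energyFlux_of_eventuallyEq_zero hτ.ne' hC hC'
      (norm_pos_iff.1 (speed_pos hv)) ?_
    filter_upwards [lt_mem_nhds ((div_lt_iff₀ hτ).1 hv)] with d hd using hsupp d hd.le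
  refine ⟨fun r hr ↦ ?_, hdiv, fun hcard hC₀ v hv ↦ ?_⟩
  · rw [energyFluxCoeff_eq_taylor_remainder hτ.ne' hC hr, hC', mul_zero, sub_zero]
  · have hv₀ := speed_pos hv
    rw [hdiv v hv]
    exact mul_ne_zero (sub_ne_zero.2 (mod_cast hcard))
      (div_ne_zero (neg_ne_zero.2 hC₀) (by positivity))

end EnergyFlux

/-- **The energy-production identity for the Hamiltonian Lorentz collision operator.**
Let `C` be `C²`, even, vanishing for `|d| ≥ 2R`, and `τ > 0`.  Then:
(i) for `r > 0`, `∫₀^τ (1 − t/τ) C″(rt) dt = (C(rτ) − C(0))/(r²τ)`;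
(ii) the vector field `Φ(v) = (∫₀^τ (1 − t/τ) C″(|v|t) dt) v` has divergence
`div Φ(v) = −C(0)/(τ|v|²)` whenever `|v| > 2R/τ`; in particular it is nonzero when
`C(0) ≠ 0`, so the Hamiltonian Fokker–Planck collision operator for the Lorentz
plasma does not conserve kinetic energy. -/
theorem hamiltonian_lorentz_energy_production
    (R τ : ℝ) (hR : 0 < R) (hτ : 0 < τ)
    (C : ℝ → ℝ) (hC : ContDiff ℝ 2 C)
    (heven : ∀ d : ℝ, C (-d) = C d)
    (hsupp : ∀ d : ℝ, 2 * R ≤ |d| → C d = 0) :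
    (∀ r : ℝ, 0 < r →
      ∫ t in (0:ℝ)..τ, (1 - t / τ) * deriv (deriv C) (r * t)
        = (C (r * τ) - C 0) / (r ^ 2 * τ)) ∧
    (∀ v : EuclideanSpace ℝ (Fin 3), 2 * R / τ < ‖v‖ →
      (∑ i : Fin 3,
        fderiv ℝ (fun w : EuclideanSpace ℝ (Fin 3) =>
            (∫ t in (0:ℝ)..τ, (1 - t / τ) * deriv (deriv C) (‖w‖ * t)) * w i)
          v (EuclideanSpace.single i 1))
        = -C 0 / (τ * ‖v‖ ^ 2)) ∧
    (C 0 ≠ 0 → ∀ v : EuclideanSpace ℝ (Fin 3), 2 * R / τ < ‖v‖ →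
      (∑ i : Fin 3,
        fderiv ℝ (fun w : EuclideanSpace ℝ (Fin 3) =>
            (∫ t in (0:ℝ)..τ, (1 - t / τ) * deriv (deriv C) (‖w‖ * t)) * w i)
          v (EuclideanSpace.single i 1)) ≠ 0) := by
  obtain ⟨hcoeff, hdiv, hdiv_ne⟩ := hamiltonian_lorentz_energy_production_general (ι := Fin 3)
    hR.le hτ hC (deriv_zero_of_even heven) fun d hd ↦ hsupp d (hd.trans (le_abs_self d))
  exact ⟨fun r hr ↦ hcoeff r hr.ne', fun v hv ↦ (hdiv v hv).trans (by norm_num),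
    hdiv_ne (by simp)⟩
end
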